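/- arXiv:1606.07119 — 3 statements merged into one kernel-verified Lean document; each statement's English description precedes it below -/
import Mathlib

section
/- Fix an integer m ≥ 3 and let S = {ℓ ∈ ℕ : 1 ≤ ℓ < m/2 and gcd(ℓ, m) = 1}, a set of cardinality φ(m)/2 where φ is Euler's totient function. Then the vectors v_k ∈ ℝ^S (for k ∈ S) defined by v_k(ℓ) = 1/sin²(πkℓ/m) form a basis of ℝ^S; equivalently, the S × S real matrix with (k, ℓ) entry 1/sin²(πkℓ/m) has nonzero determinant. -/
lemma csc_aux_hasDeriv (n : ℕ) (z : ℂ) (h1 : z - (n+1) ≠ 0) (h2 : z + (n+1) ≠ 0) :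
    HasDerivAt (fun z : ℂ => 1 / (z - (n + 1)) + 1 / (z + (n + 1)))
      (-(1 / (z - (n+1))^2 + 1 / (z + (n+1))^2)) z := by
  have a := ((hasDerivAt_id z).sub_const ((n:ℂ)+1)).inv h1
  have b := ((hasDerivAt_id z).add_const ((n:ℂ)+1)).inv h2
  convert! a.add b using 1
  · ext; simp
  · simp; ring

lemma csc_aux_norm (b : ℝ) (n : ℕ) (z : ℂ) (hz : ‖z‖ < b) (hb : b < 1) :
    (n + 1) * (1 - b) ≤ ‖z - (n+1)‖ ∧ (n + 1) * (1 - b) ≤ ‖z + (n+1)‖ := by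
  have h0 : ‖((n:ℂ)+1)‖ = n + 1 := by
    rw [← Nat.cast_succ, Complex.norm_natCast]; simp
  have h1 := norm_sub_norm_le ((n:ℂ)+1) z
  have h2 := norm_sub_norm_le ((n:ℂ)+1) (-z)
  rw [norm_neg, sub_neg_eq_add] at h2
  rw [norm_sub_rev] at h1
  rw [h0] at h1 h2
  have hn : (0:ℝ) ≤ n := n.cast_nonneg
  have h3 : 0 < b := (norm_nonneg z).trans_lt hz
  rw [add_comm z]
  constructor <;> nlinarith

lemma csc_tsum (x : ℝ) (h0 : 0 < x) (h1 : x < 1) :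
    HasSum (fun n : ℕ => 1 / ((x:ℂ) - (n+1))^2 + 1 / ((x:ℂ) + (n+1))^2)
      (Real.pi^2 / (Complex.sin (Real.pi * x))^2 - 1 / (x:ℂ)^2) := by
  obtain ⟨b, hxb, hb⟩ := exists_between h1
  have hpos : 0 < 1 - b := by linarith
  have hne : ∀ (n : ℕ) (z : ℂ), z ∈ Metric.ball (0:ℂ) b → z - (n+1) ≠ 0 ∧ z + (n+1) ≠ 0 := by
    intro n z hz
    have := csc_aux_norm b n z (by simpa using hz) hb
    have hp : 0 < ((n:ℝ)+1) * (1-b) := by positivity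
    exact ⟨norm_pos_iff.mp (hp.trans_le this.1), norm_pos_iff.mp (hp.trans_le this.2)⟩
  have hbd : ∀ (n : ℕ) (z : ℂ), z ∈ Metric.ball (0:ℂ) b →
      ‖(-(1 / (z - (n+1))^2 + 1 / (z + (n+1))^2))‖ ≤ (2 / (1-b)^2) * (1 / ((n+1 : ℕ):ℝ)^2) := by
    intro n z hz
    have := csc_aux_norm b n z (by simpa using hz) hb
    have hp : 0 < ((n:ℝ)+1) * (1-b) := by positivity
    rw [norm_neg]
    refine (norm_add_le _ _).trans ?_
    rw [norm_div, norm_div, norm_pow, norm_pow, norm_one]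
    have e1 : 1 / ‖z - (n+1)‖^2 ≤ 1 / (((n:ℝ)+1) * (1-b))^2 := by
      gcongr; exact this.1
    have e2 : 1 / ‖z + (n+1)‖^2 ≤ 1 / (((n:ℝ)+1) * (1-b))^2 := by
      gcongr; exact this.2
    refine (add_le_add e1 e2).trans (le_of_eq ?_)
    push_cast
    field_simp
    norm_num
  have hsum : Summable (fun n : ℕ => (2 / (1-b)^2) * (1 / ((n+1 : ℕ):ℝ)^2)) := by
    apply Summable.mul_left
    exact (summable_nat_add_iff (f := fun n : ℕ => 1 / (n:ℝ)^2) 1).mpr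
      (Real.summable_one_div_nat_pow.mpr (by norm_num))
  have hxm : (x:ℂ) ∈ Metric.ball (0:ℂ) b := by simp [abs_of_pos h0, hxb]
  have hZ : (x:ℂ) ∈ Complex.integerComplement := by
    rintro ⟨n, hn⟩
    have hn' : (n:ℝ) = x := by exact_mod_cast hn
    rw [← hn'] at h0 h1
    have : 0 < n := by exact_mod_cast h0
    have : n < 1 := by exact_mod_cast h1
    omega
  have hD := hasDerivAt_tsum_of_isPreconnected (𝕜 := ℂ)
    (g := fun (n:ℕ) (z : ℂ) => 1 / (z - (n + 1)) + 1 / (z + (n + 1))) hsum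
    Metric.isOpen_ball (convex_ball (0:ℂ) b).isPreconnected
    (fun n z hz => csc_aux_hasDeriv n z (hne n z hz).1 (hne n z hz).2) hbd hxm
    (summable_cotTerm hZ) hxm
  have hs : Complex.sin (Real.pi * x) ≠ 0 := sin_pi_mul_ne_zero hZ
  have hx : (x:ℂ) ≠ 0 := by exact_mod_cast h0.ne'
  have hC : HasDerivAt (fun z : ℂ => Real.pi * Complex.cot (Real.pi * z) - 1 / z)
      (-(Real.pi^2 / (Complex.sin (Real.pi * x))^2 - 1 / (x:ℂ)^2)) x := by
    have l : HasDerivAt (fun z : ℂ => Real.pi * z) (Real.pi : ℂ) (x:ℂ) := by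
      simpa using (hasDerivAt_id (x:ℂ)).const_mul (Real.pi : ℂ)
    have c := (l.ccos.div l.csin hs).const_mul (Real.pi : ℂ)
    have d := (hasDerivAt_id (x:ℂ)).inv hx
    convert! c.sub d using 1
    · ext; simp [Complex.cot]
    · simp only [id]
      have := Complex.sin_sq_add_cos_sq (Real.pi * x)
      field_simp
      linear_combination ((Real.pi:ℂ)^2 * x^2) * this
  have hE : (fun z : ℂ => ∑' n : ℕ, (1 / (z - (n + 1)) + 1 / (z + (n + 1)))) =ᶠ[nhds (x:ℂ)]
      (fun z : ℂ => Real.pi * Complex.cot (Real.pi * z) - 1 / z) := by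
    filter_upwards [Complex.isOpen_compl_range_intCast.mem_nhds hZ] with z hz
    exact (cot_series_rep' hz).symm
  have := (hD.congr_of_eventuallyEq hE.symm).unique hC
  rw [tsum_neg, neg_inj] at this
  rw [← this]
  have hS : Summable (fun n : ℕ => -(1 / ((x:ℂ) - (n+1))^2 + 1 / ((x:ℂ) + (n+1))^2)) :=
    Summable.of_norm_bounded hsum (fun n => hbd n _ hxm)
  simpa only [neg_neg] using (show Summable _ from hS.neg).hasSum

lemma summable_resid (m : ℕ) (hm : 0 < m) (a : ℕ) :
    Summable (fun n : ℕ => 1 / ((a + m * n : ℕ) : ℂ)^2) := by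
  have : Summable (fun n : ℕ => 1 / (n:ℂ)^2) := by
    have := Real.summable_one_div_nat_pow (p := 2) |>.mpr (by norm_num)
    have h := Complex.ofRealCLM.summable this
    simpa using h
  exact this.comp_injective (i := fun n : ℕ => a + m * n) (fun p q h => by
    have : m * p = m * q := by simpa using h
    exact Nat.eq_of_mul_eq_mul_left hm this)

/-- csc² as a sum over two residue classes -/
lemma csc_resid (m a : ℕ) (h0 : 0 < a) (h1 : a < m) :
    Real.pi^2 / (Complex.sin (Real.pi * (a / m : ℝ)))^2 =
      (m:ℂ)^2 * (∑' n : ℕ, 1 / ((a + m * n : ℕ) : ℂ)^2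
        + ∑' n : ℕ, 1 / (((m - a) + m * n : ℕ) : ℂ)^2) := by
  have hm : 0 < m := by omega
  have hmR : (0:ℝ) < m := by exact_mod_cast hm
  have hmC : (m:ℂ) ≠ 0 := by exact_mod_cast hm.ne'
  have haC : (a:ℂ) ≠ 0 := by exact_mod_cast h0.ne'
  have := csc_tsum (a / m) (by positivity) (by rw [div_lt_one hmR]; exact_mod_cast h1)
  have s1 := summable_resid m hm a
  have s2 := summable_resid m hm (m - a)
  rw [s1.tsum_eq_zero_add]
  have s1' := (summable_nat_add_iff 1).mpr s1
  have e := (s2.hasSum.add s1'.hasSum).mul_left ((m:ℂ)^2)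
  have hf : (fun n : ℕ => 1 / ((((a:ℝ) / m : ℝ) : ℂ) - (n+1))^2 +
      1 / ((((a:ℝ) / m : ℝ) : ℂ) + (n+1))^2) =
      fun i : ℕ => (m:ℂ)^2 * (1 / (((m - a) + m * i : ℕ) : ℂ)^2 +
        1 / ((a + m * (i + 1) : ℕ) : ℂ)^2) := by
    funext n
    push_cast [Nat.cast_sub h1.le]
    have k1 : ((a:ℂ) / m - (n+1)) = - (((m:ℂ) - a + m * n) / m) := by field_simp; ring
    have k2 : ((a:ℂ) / m + (n+1)) = (((a:ℂ) + m * (n + 1)) / m) := by field_simp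
    rw [k1, k2, neg_sq, div_pow, div_pow, one_div_div, one_div_div]
    ring
  rw [hf] at this
  have e2 := this.unique e
  rw [sub_eq_iff_eq_add] at e2
  rw [e2]
  have k3 : 1 / (((a:ℝ) / m : ℝ) : ℂ)^2 = (m:ℂ)^2 * (1 / ((a + m * 0 : ℕ) : ℂ)^2) := by
    push_cast
    rw [mul_zero, add_zero]
    field_simp
  rw [k3]
  ring

noncomputable def cscF (m : ℕ) (j : ZMod m) : ℝ := 1 / Real.sin (Real.pi * j.val / m) ^ 2

lemma cscF_natCast (m : ℕ) (hm : 0 < m) (n : ℕ) :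
    1 / Real.sin (Real.pi * n / m) ^ 2 = cscF m (n : ZMod m) := by
  have hmR : (m:ℝ) ≠ 0 := by exact_mod_cast hm.ne'
  rw [cscF, ZMod.val_natCast]
  have h : (n:ℝ) = (n % m : ℕ) + m * (n / m : ℕ) := by exact_mod_cast (Nat.mod_add_div n m).symm
  have : Real.pi * n / m = Real.pi * (n % m : ℕ) / m + (n / m : ℕ) * Real.pi := by
    rw [h]; push_cast; field_simp
  rw [this, Real.sin_add_nat_mul_pi, mul_pow, ← pow_mul, mul_comm (n/m) 2, pow_mul]
  simp

lemma cscF_neg (m : ℕ) [NeZero m] (j : ZMod m) : cscF m (-j) = cscF m j := by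
  by_cases hj : j = 0
  · simp [hj]
  have hmR : (m:ℝ) ≠ 0 := by exact_mod_cast NeZero.ne m
  rw [cscF, cscF, ZMod.neg_val, if_neg hj, Nat.cast_sub (ZMod.val_lt j).le]
  have : Real.pi * ((m:ℝ) - j.val) / m = Real.pi - Real.pi * j.val / m := by field_simp
  rw [this, Real.sin_pi_sub]

lemma cscF_eq (m : ℕ) [NeZero m] (j : ZMod m) (hj : j ≠ 0) :
    (cscF m j : ℂ) = (m:ℂ)^2 / Real.pi^2 * (∑' n : ℕ, 1 / ((j.val + m * n : ℕ) : ℂ)^2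
        + ∑' n : ℕ, 1 / (((-j).val + m * n : ℕ) : ℂ)^2) := by
  have h := csc_resid m j.val (ZMod.val_pos.mpr hj) (ZMod.val_lt j)
  rw [ZMod.neg_val, if_neg hj]
  have hpi : (Real.pi : ℂ) ≠ 0 := by exact_mod_cast Real.pi_ne_zero
  rw [div_mul_eq_mul_div, ← h, cscF]
  push_cast
  rw [mul_div_assoc]
  field_simp

open DirichletCharacter in
lemma char_LSeries (m : ℕ) [NeZero m] (hm : 2 ≤ m) (χ : DirichletCharacter ℂ m) :
    LSeries (fun n => χ n) 2 = ∑ j : ZMod m, χ j * ∑' n : ℕ, 1 / ((j.val + m * n : ℕ) : ℂ)^2 := by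
  have hs : LSeriesSummable (fun n => χ n) 2 :=
    ZMod.LSeriesSummable_of_one_lt_re χ (by norm_num)
  rw [LSeries, Nat.sumByResidueClasses hs m]
  refine Finset.sum_congr rfl fun j _ => ?_
  rw [← tsum_mul_left]
  refine tsum_congr fun n => ?_
  rw [LSeries.term_def]
  split_ifs with h
  · rw [h]; simp
  · have : ((j.val + m * n : ℕ) : ZMod m) = j := by simp
    rw [this]
    norm_cast
    rw [mul_one_div]

lemma char_sum (m : ℕ) [NeZero m] (hm : 2 ≤ m) (χ : DirichletCharacter ℂ m) :
    ∑ j : ZMod m, χ j * (cscF m j : ℂ) =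
      (m:ℂ)^2 / Real.pi^2 * ((1 + χ (-1)) * LSeries (fun n => χ n) 2) := by
  have : Fact (1 < m) := ⟨hm⟩
  have h2 : ∑ j : ZMod m, χ j * ∑' n : ℕ, 1 / (((-j).val + m * n : ℕ) : ℂ)^2 =
      χ (-1) * LSeries (fun n => χ n) 2 := by
    rw [char_LSeries m hm, Finset.mul_sum, ← Equiv.sum_comp (Equiv.neg (ZMod m))]
    refine Finset.sum_congr rfl fun j _ => ?_
    rw [Equiv.neg_apply, neg_neg, ← mul_assoc, ← map_mul, neg_one_mul]
  rw [add_mul, one_mul, ← h2, char_LSeries m hm, ← Finset.sum_add_distrib, Finset.mul_sum]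
  refine Finset.sum_congr rfl fun j _ => ?_
  by_cases hj : j = 0
  · rw [hj, MulChar.map_zero]; simp
  · rw [cscF_eq m j hj]; ring

lemma char_sum_unit (m : ℕ) [NeZero m] (χ : DirichletCharacter ℂ m) (l : ZMod m)
    (hl : IsUnit l) :
    ∑ j : ZMod m, χ j * (cscF m (j * l) : ℂ) =
      χ l⁻¹ * ∑ j : ZMod m, χ j * (cscF m j : ℂ) := by
  obtain ⟨u, rfl⟩ := hl
  rw [← Equiv.sum_comp (Units.mulRight u) (fun j => χ j * (cscF m j : ℂ)), Finset.mul_sum]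
  refine Finset.sum_congr rfl fun j _ => ?_
  rw [Units.mulRight_apply, ← mul_assoc, ← map_mul]
  congr 2
  change j = (u : ZMod m)⁻¹ * (j * u)
  rw [mul_comm j, ← mul_assoc, ZMod.inv_mul_of_unit _ u.isUnit, one_mul]

/-- The index set. -/
abbrev cscS (m : ℕ) := {ℓ : ℕ // ℓ ∈ (Finset.range m).filter
          fun ℓ => 1 ≤ ℓ ∧ 2 * ℓ < m ∧ Nat.gcd ℓ m = 1}

/-- The matrix with entries `csc² (π k ℓ / m)`, indexed by the integers
`1 ≤ ℓ < m/2` coprime to `m`, has nonzero determinant. -/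
theorem csc_sq_matrix_det_ne_zero (m : ℕ) (hm : 3 ≤ m) :
    Matrix.det
      (Matrix.of fun k ℓ : {ℓ : ℕ // ℓ ∈ (Finset.range m).filter
          fun ℓ => 1 ≤ ℓ ∧ 2 * ℓ < m ∧ Nat.gcd ℓ m = 1} =>
        (1 : ℝ) / Real.sin (Real.pi * ((k : ℕ) : ℝ) * ((ℓ : ℕ) : ℝ) / (m : ℝ)) ^ 2) ≠ 0 := by
  have : NeZero m := ⟨by omega⟩
  have : Fact (1 < m) := ⟨by omega⟩
  intro hdet
  obtain ⟨(v : cscS m → ℝ), hv, hMv⟩ := Matrix.exists_mulVec_eq_zero_iff.mpr hdet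
  apply hv
  have hprop : ∀ l : cscS m, 1 ≤ (l:ℕ) ∧ 2 * (l:ℕ) < m ∧ Nat.gcd l m = 1 := fun l =>
    (Finset.mem_filter.mp l.2).2
  have hunit : ∀ l : cscS m, IsUnit ((l : ℕ) : ZMod m) := fun l =>
    (ZMod.isUnit_iff_coprime _ _).mpr (hprop l).2.2
  have hval : ∀ l : cscS m, (((l : ℕ) : ZMod m)).val = l := fun l =>
    ZMod.val_cast_of_lt (by have := (hprop l).2.1; omega)
  -- the relation on `S`
  have hrel : ∀ k : cscS m, ∑ l : cscS m, cscF m (((k:ℕ) : ZMod m) * ((l:ℕ) : ZMod m)) * v l = 0 := by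
    intro k
    have := congrFun hMv k
    simp only [Matrix.mulVec, dotProduct, Matrix.of_apply, Pi.zero_apply] at this
    rw [← this]
    refine Finset.sum_congr rfl fun l _ => ?_
    rw [← Nat.cast_mul, ← cscF_natCast m (by omega)]
    push_cast
    rw [mul_assoc Real.pi]
  -- extended to all units
  have hrel' : ∀ k : ZMod m, IsUnit k → ∑ l : cscS m, cscF m (k * ((l:ℕ) : ZMod m)) * v l = 0 := by
    intro k hk
    have hcop : Nat.gcd k.val m = 1 := by
      rw [← ZMod.natCast_zmod_val k] at hk
      exact (ZMod.isUnit_iff_coprime _ _).mp hk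
    have hk0 : k ≠ 0 := hk.ne_zero
    have hlt := ZMod.val_lt k
    have hpos := ZMod.val_pos.mpr hk0
    by_cases h : 2 * k.val < m
    · have := hrel ⟨k.val, Finset.mem_filter.mpr ⟨Finset.mem_range.mpr hlt, hpos, h, hcop⟩⟩
      simpa using this
    · have hne : 2 * k.val ≠ m := by
        intro h2
        have : k.val ∣ Nat.gcd k.val m := Nat.dvd_gcd dvd_rfl ⟨2, by omega⟩
        rw [hcop, Nat.dvd_one] at this
        omega
      have hcop' : Nat.gcd (m - k.val) m = 1 := by
        rw [Nat.gcd_comm, Nat.gcd_self_sub_right hlt.le, Nat.gcd_comm]; exact hcop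
      have := hrel ⟨m - k.val, Finset.mem_filter.mpr
        ⟨Finset.mem_range.mpr (by omega), by omega, by omega, hcop'⟩⟩
      rw [← this]
      refine Finset.sum_congr rfl fun l _ => ?_
      have e : (((m - k.val : ℕ)) : ZMod m) = -k := by
        rw [Nat.cast_sub hlt.le]; simp
      simp only [e]
      rw [neg_mul, cscF_neg]
  -- character transform
  have hchar : ∀ χ : DirichletCharacter ℂ m,
      (1 + χ (-1)) * ∑ l : cscS m, χ ((l:ℕ) : ZMod m)⁻¹ * (v l : ℂ) = 0 := by
    intro χ
    have h0 : ∑ k : ZMod m, χ k * ∑ l : cscS m, (cscF m (k * ((l:ℕ) : ZMod m)) : ℂ) * (v l : ℂ) = 0 := by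
      refine Finset.sum_eq_zero fun k _ => ?_
      by_cases hk : IsUnit k
      · have := hrel' k hk
        have h' : ∑ l : cscS m, (cscF m (k * ((l:ℕ) : ZMod m)) : ℂ) * (v l : ℂ) = 0 := by
          exact_mod_cast this
        rw [h', mul_zero]
      · rw [MulChar.map_nonunit χ hk, zero_mul]
    simp_rw [Finset.mul_sum] at h0
    rw [Finset.sum_comm] at h0
    have h1 : ∀ l : cscS m, ∑ k : ZMod m, χ k * ((cscF m (k * ((l:ℕ) : ZMod m)) : ℂ) * (v l : ℂ)) =
        ((m:ℂ)^2 / Real.pi^2 * LSeries (fun n => χ n) 2) *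
          ((1 + χ (-1)) * (χ ((l:ℕ) : ZMod m)⁻¹ * (v l : ℂ))) := by
      intro l
      simp_rw [← mul_assoc]
      rw [← Finset.sum_mul, char_sum_unit m χ _ (hunit l), char_sum m (by omega)]
      ring
    simp_rw [h1] at h0
    rw [← Finset.mul_sum, ← Finset.mul_sum] at h0
    refine (mul_eq_zero.mp h0).resolve_left (mul_ne_zero (div_ne_zero ?_ ?_) ?_)
    · exact pow_ne_zero _ (by exact_mod_cast NeZero.ne m)
    · exact pow_ne_zero _ (by exact_mod_cast Real.pi_ne_zero)
    · exact DirichletCharacter.LSeries_ne_zero_of_one_lt_re χ (by norm_num)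
  -- inversion
  funext l₀
  have hz : ∑ χ : DirichletCharacter ℂ m, χ ((l₀:ℕ) : ZMod m) *
      ((1 + χ (-1)) * ∑ l : cscS m, χ ((l:ℕ) : ZMod m)⁻¹ * (v l : ℂ)) = 0 :=
    Finset.sum_eq_zero fun χ _ => by rw [hchar χ, mul_zero]
  simp_rw [Finset.mul_sum] at hz
  rw [Finset.sum_comm] at hz
  have h3 : ∀ l : cscS m, ∑ χ : DirichletCharacter ℂ m, χ ((l₀:ℕ) : ZMod m) *
      ((1 + χ (-1)) * (χ ((l:ℕ) : ZMod m)⁻¹ * (v l : ℂ))) =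
      if l = l₀ then (m.totient : ℂ) * v l else 0 := by
    intro l
    have a1 := DirichletCharacter.sum_char_inv_mul_char_eq ℂ (hunit l) ((l₀:ℕ) : ZMod m)
    have a2 := DirichletCharacter.sum_char_inv_mul_char_eq ℂ (hunit l) (-((l₀:ℕ) : ZMod m))
    have c1 : (((l:ℕ) : ZMod m) = ((l₀:ℕ) : ZMod m)) ↔ l = l₀ := by
      constructor
      · intro h
        have := congrArg ZMod.val h
        rw [hval, hval] at this
        exact Subtype.ext this
      · rintro rfl; rfl
    have c2 : ¬ (((l:ℕ) : ZMod m) = -((l₀:ℕ) : ZMod m)) := by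
      intro h
      have := congrArg ZMod.val h
      rw [ZMod.neg_val, if_neg (hunit l₀).ne_zero, hval, hval] at this
      have := (hprop l).2.1
      have := (hprop l₀).2.1
      omega
    rw [if_neg c2] at a2
    simp only [c1] at a1
    have : ∑ χ : DirichletCharacter ℂ m, χ ((l₀:ℕ) : ZMod m) *
      ((1 + χ (-1)) * (χ ((l:ℕ) : ZMod m)⁻¹ * (v l : ℂ))) =
      (∑ χ : DirichletCharacter ℂ m, χ ((l:ℕ) : ZMod m)⁻¹ * χ ((l₀:ℕ) : ZMod m)) * v l +
      (∑ χ : DirichletCharacter ℂ m, χ ((l:ℕ) : ZMod m)⁻¹ * χ (-((l₀:ℕ) : ZMod m))) * v l := by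
      rw [Finset.sum_mul, Finset.sum_mul, ← Finset.sum_add_distrib]
      refine Finset.sum_congr rfl fun χ _ => ?_
      rw [← neg_one_mul ((l₀:ℕ) : ZMod m), map_mul]
      ring
    rw [this, a1, a2]
    split_ifs <;> simp
  simp_rw [h3] at hz
  rw [Finset.sum_ite_eq' Finset.univ l₀, if_pos (Finset.mem_univ _)] at hz
  have ht : (m.totient : ℂ) ≠ 0 := by
    exact_mod_cast (Nat.totient_pos.mpr (by omega)).ne'
  have := (mul_eq_zero.mp hz).resolve_left ht
  exact_mod_cast this
end

section
/- Let p be an odd prime and set q = (p − 1)/2. The q × q real matrix A with entries A_{k,ℓ} = 1/sin²(πkℓ/p) for 1 ≤ k, ℓ ≤ q is invertible, i.e. det(A) ≠ 0. -/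
/-- `csc²(π a / p)`. -/
noncomputable def cscTerm (p : ℕ) (a : ℕ) : ℝ := 1 / Real.sin (Real.pi * (a : ℝ) / (p : ℝ)) ^ 2

lemma cscTerm_nonneg (p a : ℕ) : 0 ≤ cscTerm p a := by
  unfold cscTerm; positivity

lemma cscTerm_valMinAbs (p a : ℕ) [NeZero p] :
    cscTerm p a = cscTerm p ((a : ZMod p).valMinAbs.natAbs) := by
  unfold cscTerm
  have hp : (p : ℝ) ≠ 0 := by exact_mod_cast NeZero.ne p
  have h1 : (((a : ℤ) : ZMod p)) = (((a : ZMod p).valMinAbs : ℤ) : ZMod p) := by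
    rw [ZMod.coe_valMinAbs]; simp
  obtain ⟨t, ht⟩ := (ZMod.intCast_eq_intCast_iff_dvd_sub _ _ _).1 h1.symm
  set m : ℤ := (a : ZMod p).valMinAbs with hm
  have ha : (a : ℝ) = (m : ℝ) + p * t := by
    have : (a : ℤ) = m + p * t := by linarith
    exact_mod_cast this
  have h2 : Real.sin (Real.pi * (a : ℝ) / p) ^ 2 = Real.sin (Real.pi * (m : ℝ) / p) ^ 2 := by
    rw [ha, show Real.pi * ((m : ℝ) + p * t) / p = Real.pi * (m : ℝ) / p + t * Real.pi by
      field_simp, Real.sin_add_int_mul_pi, mul_pow, ← zpow_natCast, ← zpow_mul, mul_comm t,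
      zpow_mul]
    norm_num
  have h3 : Real.sin (Real.pi * (m.natAbs : ℝ) / p) ^ 2 = Real.sin (Real.pi * (m : ℝ) / p) ^ 2 := by
    rw [Nat.cast_natAbs, Int.cast_abs]
    rcases abs_choice (m : ℝ) with h | h <;> rw [h]
    rw [show Real.pi * -(m : ℝ) / p = -(Real.pi * (m : ℝ) / p) by ring, Real.sin_neg, neg_sq]
  rw [h2, h3]

/-- Telescoping bound for one term. -/
lemma csc_le (x h : ℝ) (h0 : 0 < h) (h1 : h < x) (h2 : x + h ≤ Real.pi / 2) :
    1 / Real.sin x ^ 2 ≤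
      (Real.cos (x - h) / Real.sin (x - h) - Real.cos (x + h) / Real.sin (x + h))
        / Real.sin (2 * h) := by
  have hpi := Real.pi_pos
  have a1 : 0 < Real.sin (x - h) := Real.sin_pos_of_pos_of_lt_pi (by linarith) (by linarith)
  have a2 : 0 < Real.sin (x + h) := Real.sin_pos_of_pos_of_lt_pi (by linarith) (by linarith)
  have a3 : 0 < Real.sin (2 * h) := Real.sin_pos_of_pos_of_lt_pi (by linarith) (by linarith)
  have a4 : 0 < Real.sin x := Real.sin_pos_of_pos_of_lt_pi (by linarith) (by linarith)
  have e : Real.sin (2 * h) = Real.sin (x + h) * Real.cos (x - h)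
      - Real.cos (x + h) * Real.sin (x - h) := by
    rw [← Real.sin_sub]; congr 1; ring
  have e2 : (Real.cos (x - h) / Real.sin (x - h) - Real.cos (x + h) / Real.sin (x + h))
        / Real.sin (2 * h) = 1 / (Real.sin (x - h) * Real.sin (x + h)) := by
    rw [div_sub_div _ _ a1.ne' a2.ne', div_div, div_eq_div_iff (by positivity) (by positivity), e]
    ring
  rw [e2]
  apply one_div_le_one_div_of_le (by positivity)
  rw [Real.sin_sub, Real.sin_add]
  nlinarith [Real.sin_sq_add_cos_sq x, Real.sin_sq_add_cos_sq h, sq_nonneg (Real.sin h)]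

lemma sum_cscTerm_lt (q : ℕ) (hq : 1 ≤ q) :
    ∑ j ∈ Finset.range q, cscTerm (2 * q + 1) (j + 1) < 2 * cscTerm (2 * q + 1) 1 := by
  have hpi := Real.pi_pos
  obtain ⟨h, hh⟩ : ∃ h : ℝ, h = Real.pi / (2 * (2 * q + 1)) := ⟨_, rfl⟩
  have hq' : (1 : ℝ) ≤ q := by exact_mod_cast hq
  have hpi2 : Real.pi = h * (2 * (2 * q + 1)) := by rw [hh]; field_simp
  have h0 : 0 < h := by rw [hh]; positivity
  have hterm : ∀ j : ℕ, cscTerm (2 * q + 1) j = 1 / Real.sin (2 * j * h) ^ 2 := by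
    intro j
    unfold cscTerm
    rw [hh]; push_cast
    congr 3
    field_simp
  have key : ∀ n : ℕ, n + 1 ≤ q → ∑ j ∈ Finset.range (n + 1), cscTerm (2 * q + 1) (j + 1)
      ≤ cscTerm (2 * q + 1) 1 + (Real.cos (3 * h) / Real.sin (3 * h)
        - Real.cos ((2 * n + 3) * h) / Real.sin ((2 * n + 3) * h)) / Real.sin (2 * h) := by
    intro n
    induction n with
    | zero => intro _; simp
    | succ n ih =>
      intro hn
      have hn' : (n : ℝ) + 2 ≤ q := by exact_mod_cast hn
      have := ih (by omega)
      rw [Finset.sum_range_succ, hterm (n + 1 + 1)]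
      have c := csc_le (2 * ((n + 1 + 1 : ℕ) : ℝ) * h) h h0 (by push_cast; nlinarith)
        (by push_cast; nlinarith)
      have e1 : 2 * ((n + 1 + 1 : ℕ) : ℝ) * h - h = (2 * n + 3) * h := by push_cast; ring
      have e2 : 2 * ((n + 1 + 1 : ℕ) : ℝ) * h + h = (2 * ((n + 1 : ℕ) : ℝ) + 3) * h := by
        push_cast; ring
      rw [e1, e2] at c
      rw [sub_div] at this c ⊢
      linarith
  obtain ⟨n, rfl⟩ : ∃ n, q = n + 1 := ⟨q - 1, by omega⟩
  have k := key n le_rfl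
  have e : ((2 : ℝ) * n + 3) * h = Real.pi / 2 := by rw [hpi2]; push_cast; ring
  rw [e, Real.cos_pi_div_two, zero_div, sub_zero] at k
  have t1 := hterm 1
  simp only [Nat.cast_one, mul_one] at t1
  have b3 : 3 * h ≤ Real.pi / 2 := by nlinarith
  have s2 : 0 < Real.sin (2 * h) := Real.sin_pos_of_pos_of_lt_pi (by linarith) (by linarith)
  have s3 : Real.sin (2 * h) < Real.sin (3 * h) :=
    Real.sin_lt_sin_of_lt_of_le_pi_div_two (by linarith) b3 (by linarith)
  have s3' : 0 < Real.sin (3 * h) := s2.trans s3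
  have : Real.cos (3 * h) / Real.sin (3 * h) / Real.sin (2 * h) < cscTerm (2 * (n + 1) + 1) 1 := by
    rw [t1, div_div, div_lt_div_iff₀ (by positivity) (by positivity)]
    have : Real.cos (3 * h) * Real.sin (2 * h) < Real.sin (3 * h) := by
      nlinarith [Real.cos_le_one (3 * h)]
    nlinarith
  linarith

/-- For an odd prime `p` and `q = (p-1)/2`, the `q × q` matrix with entries
`csc² (π k ℓ / p)` for `1 ≤ k, ℓ ≤ q` is invertible. -/
theorem csc_sq_matrix_det_ne_zero_prime (p : ℕ) (hp : Nat.Prime p) (hodd : Odd p) :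
    Matrix.det
      (Matrix.of fun k ℓ : Fin ((p - 1) / 2) =>
        (1 : ℝ) / Real.sin (Real.pi * (((k : ℕ) + 1 : ℕ) : ℝ) * (((ℓ : ℕ) + 1 : ℕ) : ℝ) / (p : ℝ)) ^ 2)
      ≠ 0 := by
  haveI : Fact p.Prime := ⟨hp⟩
  have h2 := hp.two_le
  obtain ⟨q, hq⟩ : ∃ q, q = (p - 1) / 2 := ⟨_, rfl⟩
  have hpq : p = 2 * q + 1 := by obtain ⟨r, hr⟩ := hodd; omega
  have hp2 : p / 2 = q := by omega
  rw [← hq]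
  have hA : (Matrix.of fun k ℓ : Fin q =>
        (1 : ℝ) / Real.sin (Real.pi * (((k : ℕ) + 1 : ℕ) : ℝ) * (((ℓ : ℕ) + 1 : ℕ) : ℝ) / (p : ℝ)) ^ 2)
      = Matrix.of fun k ℓ : Fin q => cscTerm p (((k : ℕ) + 1) * ((ℓ : ℕ) + 1)) := by
    ext k l
    simp only [Matrix.of_apply, cscTerm]
    push_cast
    rw [mul_assoc]
  rw [hA]
  have hne : ∀ k : Fin q, (((k : ℕ) + 1 : ℕ) : ZMod p) ≠ 0 := by
    intro k hk
    rw [ZMod.natCast_eq_zero_iff] at hk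
    have := Nat.le_of_dvd (by omega) hk
    have := k.2
    omega
  have hrow : ∀ k : Fin q, ∑ l : Fin q, cscTerm p (((k : ℕ) + 1) * ((l : ℕ) + 1))
      = ∑ j ∈ Finset.range q, cscTerm p (j + 1) := by
    intro k
    have h := congrArg (fun s => (s.map (cscTerm p)).sum)
      (ZMod.Ico_map_valMinAbs_natAbs_eq_Ico_map_id p _ (hne k))
    simp only [Multiset.map_map, hp2, Function.comp_def, id] at h
    change ∑ x ∈ Finset.Ico 1 q.succ, _ = ∑ x ∈ Finset.Ico 1 q.succ, _ at h
    rw [Finset.sum_Ico_eq_sum_range, Finset.sum_Ico_eq_sum_range] at h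
    simp only [Nat.succ_sub_one] at h
    rw [Fin.sum_univ_eq_sum_range (fun l => cscTerm p (((k : ℕ) + 1) * (l + 1)))]
    simp only [add_comm _ 1] at h ⊢
    rw [← h]
    refine Finset.sum_congr rfl fun j _ => ?_
    rw [cscTerm_valMinAbs]
    push_cast
    rfl
  intro hdet
  obtain ⟨v, hv0, hv⟩ := Matrix.exists_mulVec_eq_zero_iff.2 hdet
  obtain ⟨i, hi⟩ : ∃ i, v i ≠ 0 := by
    by_contra! hc
    exact hv0 (funext hc)
  obtain ⟨l0, -, hl0⟩ := Finset.exists_max_image Finset.univ (fun l => |v l|) ⟨i, Finset.mem_univ i⟩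
  have hpos : 0 < |v l0| := (abs_pos.2 hi).trans_le (hl0 i (Finset.mem_univ i))
  have hq1 : 1 ≤ q := by have := i.2; omega
  -- choose the row
  obtain ⟨k, hk⟩ : ∃ k : Fin q, cscTerm p (((k : ℕ) + 1) * ((l0 : ℕ) + 1)) = cscTerm p 1 := by
    have h := ZMod.Ico_map_valMinAbs_natAbs_eq_Ico_map_id p _ (hne l0)
    have h1 : 1 ∈ (Finset.Ico 1 (p / 2).succ).1.map (fun a => a) := by
      rw [Multiset.map_id']
      simp
      omega
    rw [← h] at h1
    obtain ⟨x, hx, hx1⟩ := Multiset.mem_map.1 h1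
    have hx' : x ∈ Finset.Ico 1 (p / 2).succ := hx
    rw [Finset.mem_Ico] at hx'
    refine ⟨⟨x - 1, by omega⟩, ?_⟩
    have : x - 1 + 1 = x := by omega
    simp only [this]
    rw [cscTerm_valMinAbs, mul_comm, Nat.cast_mul, hx1]
  have hr := congrFun hv k
  simp only [Matrix.mulVec, dotProduct, Matrix.of_apply, Pi.zero_apply] at hr
  have hS := hrow k
  rw [← Finset.add_sum_erase _ _ (Finset.mem_univ l0), hk] at hr hS
  have hlt := sum_cscTerm_lt q hq1
  rw [← hpq, ← hS] at hlt
  have hb : |∑ l ∈ Finset.univ.erase l0, cscTerm p (((k : ℕ) + 1) * ((l : ℕ) + 1)) * v l|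
      ≤ (∑ l ∈ Finset.univ.erase l0, cscTerm p (((k : ℕ) + 1) * ((l : ℕ) + 1))) * |v l0| := by
    rw [Finset.sum_mul]
    refine (Finset.abs_sum_le_sum_abs _ _).trans (Finset.sum_le_sum fun l _ => ?_)
    rw [abs_mul, abs_of_nonneg (cscTerm_nonneg _ _)]
    exact mul_le_mul_of_nonneg_left (hl0 l (Finset.mem_univ l)) (cscTerm_nonneg _ _)
  rw [← neg_eq_of_add_eq_zero_right hr, abs_neg, abs_mul, abs_of_nonneg (cscTerm_nonneg _ _)] at hb
  have := le_of_mul_le_mul_right hb hpos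
  linarith
end

section
/- Let m ≥ 1 be an integer, ζ = exp(2πi/m) ∈ ℂ, and d = ⌊m/2⌋. Define the (d+1) × (d+1) complex matrix J, with rows indexed by r ∈ {0, 1, …, d} and columns indexed by j ∈ {0, 1, …, d}, by: J_{r,j} = ζ^{rj} + ζ^{−rj} if 1 ≤ j < m/2, and J_{r,j} = ζ^{rj} if j = 0 or if m is even and j = m/2. Then J is invertible. -/
open Polynomial in
theorem cheb_comb_zero (d : ℕ) (v : Fin (d + 1) → ℂ) (x : Fin (d + 1) → ℂ)
    (hx : Function.Injective x)
    (h : ∀ j, ∑ r : Fin (d + 1), v r * (Chebyshev.T ℂ ((r : ℕ) : ℤ)).eval (x j) = 0) : v = 0 := by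
  have hp : ∑ r : Fin (d + 1), v r • Chebyshev.T ℂ ((r : ℕ) : ℤ) = 0 := by
    apply Polynomial.eq_zero_of_degree_lt_of_eval_index_eq_zero Finset.univ (v := x) hx.injOn
    · refine lt_of_le_of_lt (Polynomial.degree_sum_le _ _) ?_
      rw [Finset.sup_lt_iff (by simp [bot_lt_iff_ne_bot])]
      intro r _
      refine lt_of_le_of_lt (Polynomial.degree_smul_le _ _) ?_
      rw [Chebyshev.degree_T]
      simp
      exact_mod_cast r.2
    · intro j _
      simpa [Polynomial.eval_finset_sum] using h j
  have li := (Chebyshev.chebyshevTsequence ℂ).linearIndependent.comp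
    (fun r : Fin (d + 1) => (r : ℕ)) Fin.val_injective
  rw [Fintype.linearIndependent_iff] at li
  funext r
  exact li v hp r

theorem zeta_sum (m n : ℕ) :
    (Complex.exp (2 * Real.pi * Complex.I / (m : ℂ))) ^ n
      + (Complex.exp (2 * Real.pi * Complex.I / (m : ℂ))) ^ (-((n : ℕ) : ℤ))
      = 2 * Complex.cos (n * (2 * Real.pi / m)) := by
  rw [Complex.two_cos, zpow_neg, zpow_natCast, ← Complex.exp_nat_mul, ← Complex.exp_neg]
  congr 2 <;> ring

/-- The character matrix `J` from Section 4.3: rows indexed by `r ∈ {0,…,⌊m/2⌋}`,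
columns by `j ∈ {0,…,⌊m/2⌋}`, with entry `ζ^{rj} + ζ^{-rj}` for `1 ≤ j < m/2`
and `ζ^{rj}` for `j = 0` or (when `m` is even) `j = m/2`, where `ζ = exp(2πi/m)`.
Then `J` is invertible. -/
theorem character_matrix_invertible (m : ℕ) (hm : 1 ≤ m) :
    IsUnit
      (Matrix.of fun r j : Fin (m / 2 + 1) =>
        let ζ : ℂ := Complex.exp (2 * Real.pi * Complex.I / (m : ℂ))
        if 1 ≤ (j : ℕ) ∧ 2 * (j : ℕ) < m then
          ζ ^ ((r : ℕ) * (j : ℕ)) + ζ ^ (-(((r : ℕ) * (j : ℕ) : ℕ) : ℤ))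
        else
          ζ ^ ((r : ℕ) * (j : ℕ))) := by
  set θ : Fin (m / 2 + 1) → ℝ := fun j => (j : ℕ) * (2 * Real.pi / m) with hθ
  have hm0 : (0 : ℝ) < m := by exact_mod_cast hm
  have hinj : Function.Injective (fun j => Complex.cos (θ j)) := by
    have hmem : ∀ j, θ j ∈ Set.Icc 0 Real.pi := by
      intro j
      have h1 : (2 * (j : ℕ) : ℝ) ≤ m := by
        have : 2 * (j : ℕ) ≤ m := by omega
        exact_mod_cast this
      constructor
      · have := Real.pi_pos
        simp only [hθ]; positivity
      · simp only [hθ]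
        rw [← mul_div_assoc, div_le_iff₀ hm0]
        nlinarith [Real.pi_pos]
    intro a b hab
    beta_reduce at hab
    have hab' : Real.cos (θ a) = Real.cos (θ b) := by exact_mod_cast hab
    have h2 := Real.injOn_cos (hmem a) (hmem b) hab'
    have h3 : (2 * Real.pi / m : ℝ) ≠ 0 := by
      have := Real.pi_pos
      positivity
    have h4 := mul_right_cancel₀ h3 h2
    exact Fin.ext (by exact_mod_cast h4)
  rw [← Matrix.vecMul_injective_iff_isUnit]
  rw [← Matrix.coe_vecMulLinear, ← LinearMap.ker_eq_bot, LinearMap.ker_eq_bot']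
  intro v hv
  apply cheb_comb_zero _ v _ hinj
  intro j
  have hj := congrFun hv j
  simp only [Matrix.vecMulLinear_apply, Matrix.vecMul, dotProduct, Matrix.of_apply,
    Pi.zero_apply] at hj
  have hT : ∀ r : Fin (m / 2 + 1), (Polynomial.Chebyshev.T ℂ ((r : ℕ) : ℤ)).eval
      (Complex.cos (θ j)) = Complex.cos (((r : ℕ) * (j : ℕ) : ℕ) * (2 * Real.pi / m)) := by
    intro r
    rw [Polynomial.Chebyshev.T_complex_cos]
    congr 1
    simp only [hθ]
    push_cast
    ring
  simp only [hT]
  split_ifs at hj with hc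
  · simp only [zeta_sum] at hj
    have : (2 : ℂ) * ∑ r : Fin (m / 2 + 1), v r *
        Complex.cos (((r : ℕ) * (j : ℕ) : ℕ) * (2 * Real.pi / m)) = 0 := by
      rw [← hj, Finset.mul_sum]
      exact Finset.sum_congr rfl fun r _ => by ring
    simpa using this
  · rw [← hj]
    refine Finset.sum_congr rfl fun r _ => ?_
    congr 1
    have hz := zeta_sum m ((r : ℕ) * (j : ℕ))
    have h1 : (Complex.exp (2 * Real.pi * Complex.I / (m : ℂ))) ^ m = 1 :=
      (Complex.isPrimitiveRoot_exp m (by omega)).pow_eq_one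
    set ζ := Complex.exp (2 * Real.pi * Complex.I / (m : ℂ))
    have h2 : ζ ^ ((r : ℕ) * (j : ℕ)) * ζ ^ ((r : ℕ) * (j : ℕ)) = 1 := by
      rw [← pow_add]
      have : (j : ℕ) = 0 ∨ 2 * (j : ℕ) = m := by omega
      rcases this with h | h
      · simp [h]
      · have : (r : ℕ) * (j : ℕ) + (r : ℕ) * (j : ℕ) = m * r := by linear_combination (r : ℕ) * h
        rw [this, pow_mul, h1, one_pow]
    rw [zpow_neg, zpow_natCast, inv_eq_of_mul_eq_one_right h2] at hz
    linear_combination -hz / 2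
end
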